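/- arXiv:1708.04122 — 2 statements merged into one kernel-verified Lean document; each statement's English description precedes it below -/
import Mathlib

section
/- Extremizers of the problem defining 𝒞(∞) are unique up to multiplication by a nonzero complex scalar: if F₁, F₂ ∈ ℰ are nonzero functions with |F₁(0)|/‖F₁‖₁ = |F₂(0)|/‖F₂‖₁ = 𝒞(∞), then F₂ = c·F₁ for some nonzero complex number c. -/
open MeasureTheory Filter
open scoped FourierTransform Real

/-- The class 𝒜 sharp constant 𝒞(A). -/
noncomputable def Ccal (A : ℝ) : ℝ :=
  sSup { r : ℝ | ∃ F : ℝ → ℂ, Continuous F ∧ Integrable F ∧ F ≠ 0 ∧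
    r = (‖F 0‖ - A * ∫ t in {t : ℝ | 1 ≤ |t|}, ‖𝓕 F t‖) / ∫ x : ℝ, ‖F x‖ }

/-- 𝒞(∞), over the bandlimited class ℰ. -/
noncomputable def CcalInf : ℝ :=
  sSup { r : ℝ | ∃ F : ℝ → ℂ, Continuous F ∧ Integrable F ∧ F ≠ 0 ∧
    Function.support (𝓕 F) ⊆ Set.Icc (-1 : ℝ) 1 ∧
    r = ‖F 0‖ / ∫ x : ℝ, ‖F x‖ }

/-- Fourier transform of a real-valued function, as a real number (its real part). -/
noncomputable def FTr (F : ℝ → ℝ) (t : ℝ) : ℝ := (𝓕 (fun x => (F x : ℂ)) t).re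

/-- The class 𝒜⁺ sharp constant 𝒞⁺(A). -/
noncomputable def CcalPlus (A : ℝ) : ℝ :=
  sSup { r : ℝ | ∃ F : ℝ → ℝ, Continuous F ∧ Integrable F ∧ F ≠ 0 ∧ (∀ x, F (-x) = F x) ∧
    r = (F 0 - A * ∫ t in {t : ℝ | 1 ≤ |t|}, max (FTr F t) 0) / ∫ x : ℝ, |F x| }

/-- 𝒞⁺(∞), over the class ℰ⁺. -/
noncomputable def CcalPlusInf : ℝ :=
  sSup { r : ℝ | ∃ F : ℝ → ℝ, Continuous F ∧ Integrable F ∧ F ≠ 0 ∧ (∀ x, F (-x) = F x) ∧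
    (∀ t : ℝ, 1 ≤ |t| → FTr F t ≤ 0) ∧
    r = F 0 / ∫ x : ℝ, |F x| }

/-- The prime counting function at a real argument. -/
noncomputable def primePi (x : ℝ) : ℕ := Nat.primeCounting ⌊x⌋₊

/-- The Brun–Titchmarsh constant 𝐁. -/
noncomputable def BrunTitchmarsh : ℝ :=
  limsup (fun x : ℝ =>
    ((primePi (x + Real.sqrt x) : ℝ) - (primePi x : ℝ)) / (Real.sqrt x / Real.log x)) atTop


open Complex Topology

/-- Continuous integrable functions on `ℝ` whose Fourier transform is supported in `[-1, 1]`. -/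
structure Bandlimited (F : ℝ → ℂ) : Prop where
  continuous : Continuous F
  integrable : Integrable F
  support_subset : Function.support (𝓕 F) ⊆ Set.Icc (-1 : ℝ) 1

/-- The entire function with frequency density `φ` on `[-1, 1]`. -/
noncomputable def paleyWiener (φ : ℝ → ℂ) (z : ℂ) : ℂ :=
  ∫ t in (-1 : ℝ)..1, φ t * cexp (2 * π * I * z * t)

lemma fourierInv_eq_paleyWiener {φ : ℝ → ℂ} (hs : Function.support φ ⊆ Set.Icc (-1 : ℝ) 1)
    (x : ℝ) : 𝓕⁻ φ x = paleyWiener φ x := by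
  rw [Real.fourierInv_eq', paleyWiener, intervalIntegral.integral_of_le (by norm_num),
    ← integral_Icc_eq_integral_Ioc, setIntegral_eq_integral_of_forall_compl_eq_zero]
  · refine integral_congr_ae (Eventually.of_forall fun t => ?_)
    simp only [RCLike.inner_apply, conj_trivial, smul_eq_mul]
    rw [mul_comm]
    congr 2
    push_cast
    ring
  · intro t ht
    have : φ t = 0 := by
      by_contra h
      exact ht (hs h)
    simp [this]

lemma integrable_of_support_subset_Icc {φ : ℝ → ℂ} (hc : Continuous φ)
    (hs : Function.support φ ⊆ Set.Icc (-1 : ℝ) 1) : Integrable φ :=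
  hc.integrable_of_hasCompactSupport
    (HasCompactSupport.of_support_subset_isCompact isCompact_Icc hs)

lemma continuous_fourier_of_integrable {F : ℝ → ℂ} (hF : Integrable F) : Continuous (𝓕 F) :=
  VectorFourier.fourierIntegral_continuous Real.continuous_fourierChar
    (by exact continuous_inner) hF

lemma Bandlimited.continuous_fourier {F : ℝ → ℂ} (hF : Bandlimited F) : Continuous (𝓕 F) :=
  continuous_fourier_of_integrable hF.integrable

lemma Bandlimited.eq_paleyWiener {F : ℝ → ℂ} (hF : Bandlimited F) (x : ℝ) :
    F x = paleyWiener (𝓕 F) x := by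
  rw [← fourierInv_eq_paleyWiener hF.support_subset,
    hF.continuous.fourierInv_fourier_eq hF.integrable
      (integrable_of_support_subset_Icc hF.continuous_fourier hF.support_subset)]

lemma differentiable_paleyWiener {φ : ℝ → ℂ} (hc : Continuous φ) :
    Differentiable ℂ (paleyWiener φ) := by
  intro z₀
  have hcont : Continuous fun p : ℂ × ℝ =>
      φ p.2 * (cexp (2 * π * I * p.1 * p.2) * (2 * π * I * p.2)) := by fun_prop
  obtain ⟨B, hB⟩ := ((isCompact_closedBall z₀ 1).prod (isCompact_Icc (a := (-1 : ℝ)) (b := 1)))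
    |>.exists_bound_of_continuousOn hcont.continuousOn
  refine (intervalIntegral.hasDerivAt_integral_of_dominated_loc_of_deriv_le
    (F := fun z t => φ t * cexp (2 * π * I * z * t))
    (F' := fun z t => φ t * (cexp (2 * π * I * z * t) * (2 * π * I * t)))
    (bound := fun _ => B) (Metric.closedBall_mem_nhds z₀ one_pos) ?_ ?_ ?_ ?_ ?_ ?_).2
    |>.differentiableAt
  · exact Eventually.of_forall fun z =>
      (Continuous.aestronglyMeasurable (by fun_prop))
  · exact Continuous.intervalIntegrable (by fun_prop) _ _
  · exact Continuous.aestronglyMeasurable (by fun_prop)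
  · refine Eventually.of_forall fun t ht z hz => hB (z, t) ⟨hz, ?_⟩
    rw [Set.uIoc_of_le (by norm_num)] at ht
    exact Set.Ioc_subset_Icc_self ht
  · simp
  · refine Eventually.of_forall fun t _ z _ => ?_
    have : HasDerivAt (fun z : ℂ => 2 * π * I * z * t) (2 * π * I * t) z := by
      simpa using ((hasDerivAt_id z).const_mul (2 * π * I)).mul_const (t : ℂ)
    exact this.cexp.const_mul _

lemma paleyWiener_linear {φ ψ : ℝ → ℂ} (hφ : Continuous φ) (hψ : Continuous ψ) (a b z : ℂ) :
    paleyWiener (fun t => a * φ t + b * ψ t) z = a * paleyWiener φ z + b * paleyWiener ψ z := by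
  simp only [paleyWiener]
  rw [← intervalIntegral.integral_const_mul, ← intervalIntegral.integral_const_mul,
    ← intervalIntegral.integral_add (Continuous.intervalIntegrable (by fun_prop) _ _)
      (Continuous.intervalIntegrable (by fun_prop) _ _)]
  congr 1
  ext t
  ring

lemma eq_zero_of_support_subset_Icc {φ : ℝ → ℂ}
    (hs : Function.support φ ⊆ Set.Icc (-1 : ℝ) 1) {t : ℝ} (ht : t ∉ Set.Icc (-1 : ℝ) 1) :
    φ t = 0 := by
  by_contra h
  exact ht (hs h)

/-- A zero of a Paley-Wiener function can be divided out without enlarging the band. -/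
lemma exists_paleyWiener_div {φ : ℝ → ℂ} (hc : Continuous φ)
    (hs : Function.support φ ⊆ Set.Icc (-1 : ℝ) 1) {w : ℂ} (hw : paleyWiener φ w = 0) :
    ∃ ψ : ℝ → ℂ, Continuous ψ ∧ Function.support ψ ⊆ Set.Icc (-1 : ℝ) 1 ∧
      ∀ z, paleyWiener φ z = (z - w) * paleyWiener ψ z := by
  set k : ℝ → ℂ := fun s => φ s * cexp (2 * π * I * w * s) with hk
  have hkc : Continuous k := by fun_prop
  have hki : ∀ a b, IntervalIntegrable k volume a b := fun a b => hkc.intervalIntegrable a b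
  set P : ℝ → ℂ := fun t => ∫ s in (-1 : ℝ)..t, k s with hP
  have hPd : ∀ t, HasDerivAt P (k t) t := fun t =>
    intervalIntegral.integral_hasDerivAt_right (hki _ _)
      (hkc.stronglyMeasurableAtFilter _ _) hkc.continuousAt
  have hPc : Continuous P := continuous_iff_continuousAt.2 fun t => (hPd t).continuousAt
  have hP1 : P 1 = 0 := hw
  have hPneg : P (-1) = 0 := intervalIntegral.integral_same
  refine ⟨fun t => -(2 * π * I) * (P t * cexp (-(2 * π * I * w * t))), by fun_prop, ?_, ?_⟩
  · intro t ht
    by_contra hmem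
    apply ht
    suffices P t = 0 by simp [this]
    have hcong : ∀ a : ℝ, (∀ s ∈ Set.uIoo a t, s ∉ Set.Icc (-1 : ℝ) 1) →
        ∫ s in a..t, k s = 0 := by
      intro a ha
      rw [intervalIntegral.integral_congr_uIoo (g := fun _ => (0 : ℂ))]
      · simp
      · intro s hs'
        simp [hk, eq_zero_of_support_subset_Icc hs (ha s hs')]
    rcases lt_or_ge t (-1) with h | h
    · refine hcong _ fun s hs' => ?_
      rw [Set.uIoo_of_ge h.le] at hs'
      exact fun h' => absurd h'.1 (not_le.2 hs'.2)
    · have h1 : 1 < t := by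
        by_contra h2
        exact hmem ⟨h, not_lt.1 h2⟩
      have : P t = P 1 + ∫ s in (1 : ℝ)..t, k s :=
        (intervalIntegral.integral_add_adjacent_intervals (hki _ _) (hki _ _)).symm
      rw [this, hP1, zero_add]
      refine hcong _ fun s hs' => ?_
      rw [Set.uIoo_of_le h1.le] at hs'
      exact fun h' => absurd h'.2 (not_le.2 hs'.1)
  · intro z
    have hv : ∀ t : ℝ, HasDerivAt (fun t : ℝ => cexp (2 * π * I * (z - w) * t))
        (cexp (2 * π * I * (z - w) * t) * (2 * π * I * (z - w))) t := by
      intro t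
      have : HasDerivAt (fun u : ℂ => 2 * π * I * (z - w) * u) (2 * π * I * (z - w)) (t : ℂ) := by
        simpa using (hasDerivAt_id (t : ℂ)).const_mul (2 * π * I * (z - w))
      exact this.cexp.comp_ofReal
    have key := intervalIntegral.integral_mul_deriv_eq_deriv_mul (a := -1) (b := 1)
      (fun t _ => hPd t) (fun t _ => hv t) (hki _ _)
      (Continuous.intervalIntegrable (by fun_prop) _ _)
    rw [hP1, hPneg] at key
    simp only [zero_mul, sub_zero, zero_sub] at key
    have h1 : paleyWiener φ z = ∫ t in (-1 : ℝ)..1, k t * cexp (2 * π * I * (z - w) * t) := by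
      rw [paleyWiener]
      congr 1
      ext t
      simp only [hk]
      rw [mul_assoc (φ t), ← Complex.exp_add]
      congr 2
      ring
    rw [h1, ← neg_eq_iff_eq_neg.2 key, paleyWiener, ← intervalIntegral.integral_const_mul,
      ← intervalIntegral.integral_neg]
    congr 1
    ext t
    have : cexp (2 * π * I * (z - w) * t)
        = cexp (-(2 * π * I * w * t)) * cexp (2 * π * I * z * t) := by
      rw [← Complex.exp_add]
      congr 1
      ring
    rw [this]
    ring

lemma bandlimited_paleyWiener {φ : ℝ → ℂ} (hc : Continuous φ)
    (hs : Function.support φ ⊆ Set.Icc (-1 : ℝ) 1)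
    (hi : Integrable fun x : ℝ => paleyWiener φ x) :
    Bandlimited fun x : ℝ => paleyWiener φ x := by
  have heq : (fun x : ℝ => paleyWiener φ x) = 𝓕⁻ φ :=
    funext fun x => (fourierInv_eq_paleyWiener hs x).symm
  have hφi := integrable_of_support_subset_Icc hc hs
  refine ⟨(differentiable_paleyWiener hc).continuous.comp continuous_ofReal, hi, ?_⟩
  rw [heq] at hi ⊢
  have hFi : Integrable (𝓕 φ) := by
    have := hi.comp_neg
    simpa [Real.fourierInv_eq_fourier_neg] using this
  rwa [hc.fourier_fourierInv_eq hφi hFi]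

lemma fourier_linear {F G : ℝ → ℂ} (hF : Integrable F) (hG : Integrable G) (a b : ℂ) :
    𝓕 (fun x => a * F x + b * G x) = fun t => a * 𝓕 F t + b * 𝓕 G t := by
  ext t
  simp only [Real.fourier_real_eq]
  have h : ∀ {H : ℝ → ℂ}, Integrable H → Integrable fun v => Real.fourierChar (-(v * t)) • H v := by
    intro H hH
    simpa [mul_comm t] using (Real.fourierIntegral_convergent_iff (μ := volume) (f := H) t).2 hH
  rw [← integral_const_mul, ← integral_const_mul,
    ← integral_add ((h hF).const_mul a) ((h hG).const_mul b)]
  congr 1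
  ext v
  simp only [Circle.smul_def, smul_eq_mul]
  ring

lemma fourier_conj (F : ℝ → ℂ) (t : ℝ) :
    𝓕 (fun x => starRingEnd ℂ (F x)) t = starRingEnd ℂ (𝓕 F (-t)) := by
  simp only [Real.fourier_real_eq_integral_exp_smul]
  rw [← integral_conj]
  congr 1
  ext v
  simp only [smul_eq_mul, map_mul, ← Complex.exp_conj]
  congr 2
  simp [conj_ofNat]

lemma fourier_comp_add (F : ℝ → ℂ) (a t : ℝ) :
    𝓕 (fun x => F (x + a)) t = Real.fourierChar (a * t) • 𝓕 F t := by
  have := congrFun (VectorFourier.fourierIntegral_comp_add_right Real.fourierChar volume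
    (innerₗ ℝ) F a) t
  have hin : innerₗ ℝ a t = a * t := by simp [mul_comm]
  rw [hin] at this
  exact this

lemma norm_fourier_le (F : ℝ → ℂ) (t : ℝ) : ‖𝓕 F t‖ ≤ ∫ x, ‖F x‖ :=
  VectorFourier.norm_fourierIntegral_le_integral_norm _ _ _ F t

lemma Bandlimited.linear {F G : ℝ → ℂ} (hF : Bandlimited F) (hG : Bandlimited G) (a b : ℂ) :
    Bandlimited fun x => a * F x + b * G x := by
  refine ⟨(hF.continuous.const_mul a).add (hG.continuous.const_mul b),
    (hF.integrable.const_mul a).add (hG.integrable.const_mul b), fun t ht => ?_⟩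
  by_contra h
  apply ht
  simp [fourier_linear hF.integrable hG.integrable, eq_zero_of_support_subset_Icc hF.support_subset h,
    eq_zero_of_support_subset_Icc hG.support_subset h]

lemma Bandlimited.conj {F : ℝ → ℂ} (hF : Bandlimited F) :
    Bandlimited fun x => starRingEnd ℂ (F x) := by
  refine ⟨continuous_conj.comp hF.continuous, ?_, fun t ht => ?_⟩
  · exact (integrable_norm_iff (continuous_conj.comp hF.continuous).aestronglyMeasurable).1
      (by simpa using hF.integrable.norm)
  · rw [Function.mem_support, fourier_conj] at ht
    have := hF.support_subset (a := -t) (by simpa using ht)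
    exact ⟨by linarith [this.2], by linarith [this.1]⟩

lemma Bandlimited.comp_add {F : ℝ → ℂ} (hF : Bandlimited F) (a : ℝ) :
    Bandlimited fun x => F (x + a) := by
  refine ⟨hF.continuous.comp (continuous_add_const a), hF.integrable.comp_add_right a,
    fun t ht => hF.support_subset ?_⟩
  rw [Function.mem_support, fourier_comp_add] at ht
  exact fun h => ht (by simp [h])

lemma Bandlimited.norm_apply_zero_le {F : ℝ → ℂ} (hF : Bandlimited F) :
    ‖F 0‖ ≤ 2 * ∫ x, ‖F x‖ := by
  rw [hF.eq_paleyWiener 0, paleyWiener]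
  refine (intervalIntegral.norm_integral_le_of_norm_le_const (C := ∫ x, ‖F x‖) fun t _ => ?_).trans
    (le_of_eq ?_)
  · simpa using norm_fourier_le F t
  · norm_num
    ring

lemma paleyWiener_fourier_conj {F : ℝ → ℂ} (hreal : ∀ x, starRingEnd ℂ (F x) = F x) (z : ℂ) :
    paleyWiener (𝓕 F) (starRingEnd ℂ z) = starRingEnd ℂ (paleyWiener (𝓕 F) z) := by
  have hsym : ∀ t, 𝓕 F (-t) = starRingEnd ℂ (𝓕 F t) := fun t => by
    have := fourier_conj F (-t)
    simpa [hreal] using this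
  have h2 : starRingEnd ℂ (paleyWiener (𝓕 F) z)
      = ∫ t in (-1 : ℝ)..1, 𝓕 F (-t) * cexp (2 * π * I * (starRingEnd ℂ z) * (-t : ℝ)) := by
    rw [paleyWiener, intervalIntegral.integral_of_le (by norm_num),
      intervalIntegral.integral_of_le (by norm_num), ← integral_conj]
    congr 1
    ext t
    rw [map_mul, hsym, ← Complex.exp_conj]
    congr 2
    simp [conj_ofNat]
  rw [h2, intervalIntegral.integral_comp_neg
    (fun t : ℝ => 𝓕 F t * cexp (2 * π * I * (starRingEnd ℂ z) * t))]
  simp [paleyWiener]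

/-- Bandlimited functions of least `L¹` norm among those with value `1` at the origin. -/
structure IsExtremizer (F : ℝ → ℂ) : Prop where
  bandlimited : Bandlimited F
  apply_zero : F 0 = 1
  integral_norm_le : ∀ G : ℝ → ℂ, Bandlimited G → G 0 = 1 → ∫ x, ‖F x‖ ≤ ∫ x, ‖G x‖

lemma IsExtremizer.integral_norm_eq {F G : ℝ → ℂ} (hF : IsExtremizer F) (hG : IsExtremizer G) :
    ∫ x, ‖F x‖ = ∫ x, ‖G x‖ :=
  le_antisymm (hF.integral_norm_le G hG.bandlimited hG.apply_zero)
    (hG.integral_norm_le F hF.bandlimited hF.apply_zero)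

lemma eq_zero_of_integral_le_zero {g : ℝ → ℝ} (hc : Continuous g) (hi : Integrable g)
    (h0 : ∀ x, 0 ≤ g x) (hle : ∫ x, g x ≤ 0) (x : ℝ) : g x = 0 := by
  have h1 : ∫ x, g x = 0 := le_antisymm hle (integral_nonneg h0)
  rw [integral_eq_zero_iff_of_nonneg h0 hi] at h1
  exact congrFun ((hc.ae_eq_iff_eq volume continuous_zero).1 h1) x

lemma IsExtremizer.norm_add {F G : ℝ → ℂ} (hF : IsExtremizer F) (hG : IsExtremizer G) (x : ℝ) :
    ‖F x + G x‖ = ‖F x‖ + ‖G x‖ := by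
  have hFi := hF.bandlimited.integrable
  have hGi := hG.bandlimited.integrable
  have hFc := hF.bandlimited.continuous
  have hGc := hG.bandlimited.continuous
  have hmid := hF.integral_norm_le _ (hF.bandlimited.linear hG.bandlimited (1 / 2) (1 / 2))
    (by simp [hF.apply_zero, hG.apply_zero]; norm_num)
  have hhalf : ∀ x, ‖(1 / 2 : ℂ) * F x + (1 / 2 : ℂ) * G x‖ = 1 / 2 * ‖F x + G x‖ := fun x => by
    rw [← mul_add, norm_mul]
    norm_num
  simp only [hhalf] at hmid
  rw [integral_const_mul] at hmid
  have := eq_zero_of_integral_le_zero (g := fun x => ‖F x‖ + ‖G x‖ - ‖F x + G x‖) (by fun_prop)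
    ((hFi.norm.add hGi.norm).sub (hFi.add hGi).norm)
    (fun x => sub_nonneg.2 (norm_add_le _ _)) ?_ x
  · linarith
  · have e1 : ∫ x, (‖F x‖ + ‖G x‖ - ‖F x + G x‖)
        = (∫ x, ‖F x‖) + (∫ x, ‖G x‖) - ∫ x, ‖F x + G x‖ := by
      rw [integral_sub (f := fun x => ‖F x‖ + ‖G x‖) (g := fun x => ‖F x + G x‖)
        (hFi.norm.add hGi.norm) (hFi.add hGi).norm, integral_add hFi.norm hGi.norm]
    rw [e1, ← hF.integral_norm_eq hG]
    linarith

lemma IsExtremizer.conj {F : ℝ → ℂ} (hF : IsExtremizer F) :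
    IsExtremizer fun x => starRingEnd ℂ (F x) :=
  ⟨hF.bandlimited.conj, by simp [hF.apply_zero], fun G hG hG0 => by
    simpa using hF.integral_norm_le G hG hG0⟩

lemma IsExtremizer.im_eq_zero {F : ℝ → ℂ} (hF : IsExtremizer F) (x : ℝ) : (F x).im = 0 := by
  have h := hF.norm_add hF.conj x
  rw [add_conj, norm_conj, norm_real, Real.norm_eq_abs, abs_mul, abs_two] at h
  exact abs_re_eq_norm.1 (by linarith)

lemma IsExtremizer.conj_apply {F : ℝ → ℂ} (hF : IsExtremizer F) (x : ℝ) :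
    starRingEnd ℂ (F x) = F x :=
  conj_eq_iff_im.2 (hF.im_eq_zero x)

lemma IsExtremizer.convex {F G : ℝ → ℂ} (hF : IsExtremizer F) (hG : IsExtremizer G)
    {a b : ℝ} (ha : 0 ≤ a) (hb : 0 ≤ b) (hab : a + b = 1) :
    IsExtremizer fun x => (a : ℂ) * F x + (b : ℂ) * G x := by
  refine ⟨hF.bandlimited.linear hG.bandlimited a b, ?_, fun H hH hH0 => ?_⟩
  · simp only [hF.apply_zero, hG.apply_zero, mul_one]
    exact_mod_cast hab
  · have hFi := hF.bandlimited.integrable.norm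
    have hGi := hG.bandlimited.integrable.norm
    calc ∫ x, ‖(a : ℂ) * F x + (b : ℂ) * G x‖
        ≤ ∫ x, (a * ‖F x‖ + b * ‖G x‖) := by
          refine integral_mono (hF.bandlimited.linear hG.bandlimited a b).integrable.norm
            ((hFi.const_mul a).add (hGi.const_mul b)) fun x => ?_
          refine (norm_add_le _ _).trans (le_of_eq ?_)
          simp [abs_of_nonneg ha, abs_of_nonneg hb]
      _ = (a + b) * ∫ x, ‖F x‖ := by
          rw [integral_add (hFi.const_mul a) (hGi.const_mul b), integral_const_mul,
            integral_const_mul, ← hF.integral_norm_eq hG]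
          ring
      _ ≤ ∫ x, ‖H x‖ := by
          rw [hab, one_mul]
          exact hF.integral_norm_le H hH hH0

/-- A bandlimited nonnegative multiple of an extremizer vanishes as soon as it vanishes at `0`. -/
lemma IsExtremizer.eq_zero_of_nonneg_multiple {F G : ℝ → ℂ} (hF : IsExtremizer F)
    (hG : Bandlimited G) (hG0 : G 0 = 0)
    (hmul : ∀ᵐ x, ∃ h : ℝ, 0 ≤ h ∧ G x = h * F x) (x : ℝ) : G x = 0 := by
  have hFi := hF.bandlimited.integrable
  set D : ℕ → ℝ → ℝ := fun n x =>
    (n + 1 : ℝ) * (‖F x‖ - ‖(1 : ℂ) * F x + (-((n + 1 : ℝ)⁻¹ : ℝ) : ℂ) * G x‖) with hD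
  have hlin : ∀ n : ℕ, Bandlimited fun x =>
      (1 : ℂ) * F x + (-((n + 1 : ℝ)⁻¹ : ℝ) : ℂ) * G x := fun n =>
    hF.bandlimited.linear hG 1 _
  have hDi : ∀ n, Integrable (D n) := fun n =>
    (hFi.norm.sub (hlin n).integrable.norm).const_mul _
  have hDle : ∀ n, ∫ x, D n x ≤ 0 := by
    intro n
    have h1 := hF.integral_norm_le _ (hlin n) (by simp [hF.apply_zero, hG0])
    simp only [hD]
    rw [integral_const_mul, integral_sub hFi.norm (hlin n).integrable.norm]
    exact mul_nonpos_of_nonneg_of_nonpos (by positivity) (by linarith)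
  have htend : Tendsto (fun n => ∫ x, D n x) atTop (𝓝 (∫ x, ‖G x‖)) := by
    refine tendsto_integral_of_dominated_convergence (fun x => ‖G x‖)
      (fun n => (hDi n).aestronglyMeasurable) hG.integrable.norm (fun n => ?_) ?_
    · refine Eventually.of_forall fun x => ?_
      have hn : (0 : ℝ) < n + 1 := by positivity
      have h1 := abs_norm_sub_norm_le (F x)
        ((1 : ℂ) * F x + (-((n + 1 : ℝ)⁻¹ : ℝ) : ℂ) * G x)
      have h2 : ‖F x - ((1 : ℂ) * F x + (-((n + 1 : ℝ)⁻¹ : ℝ) : ℂ) * G x)‖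
          = (n + 1 : ℝ)⁻¹ * ‖G x‖ := by
        rw [show F x - ((1 : ℂ) * F x + (-((n + 1 : ℝ)⁻¹ : ℝ) : ℂ) * G x)
          = (((n + 1 : ℝ)⁻¹ : ℝ) : ℂ) * G x by ring, norm_mul, norm_real, Real.norm_eq_abs,
          abs_of_pos (inv_pos.2 hn)]
      rw [h2] at h1
      rw [hD, Real.norm_eq_abs, abs_mul, abs_of_pos hn]
      calc _ ≤ (n + 1 : ℝ) * ((n + 1 : ℝ)⁻¹ * ‖G x‖) := by gcongr
        _ = ‖G x‖ := by field_simp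
    · filter_upwards [hmul] with x ⟨h, h0, hx⟩
      refine tendsto_const_nhds.congr' ?_
      filter_upwards [eventually_ge_atTop ⌈h⌉₊] with n hn
      have hhn : h ≤ n := Nat.ceil_le.1 hn
      have hn0 : (0 : ℝ) < n + 1 := by positivity
      have h1 : (1 : ℂ) * F x + (-((n + 1 : ℝ)⁻¹ : ℝ) : ℂ) * G x
          = ((1 - (n + 1 : ℝ)⁻¹ * h : ℝ) : ℂ) * F x := by
        rw [hx]
        push_cast
        ring
      have h2 : 0 ≤ 1 - (n + 1 : ℝ)⁻¹ * h := by
        rw [sub_nonneg, inv_mul_le_iff₀ hn0]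
        linarith
      simp only [hD]
      rw [h1, hx, norm_mul, norm_mul, norm_real, norm_real, Real.norm_eq_abs, Real.norm_eq_abs,
        abs_of_nonneg h0, abs_of_nonneg h2]
      field_simp
      ring
  have hle : ∫ x, ‖G x‖ ≤ 0 := le_of_tendsto' htend hDle
  exact norm_eq_zero.1 (eq_zero_of_integral_le_zero hG.continuous.norm hG.integrable.norm
    (fun _ => norm_nonneg _) hle x)

lemma integrable_of_norm_le_of_lt_abs {F G : ℝ → ℂ} (hF : Integrable F) (hG : Continuous G)
    {R c : ℝ} (h : ∀ x, R < |x| → ‖G x‖ ≤ c * ‖F x‖) : Integrable G := by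
  have hK : IntegrableOn G (Set.Icc (-R) R) := hG.continuousOn.integrableOn_Icc
  have hKc : IntegrableOn G (Set.Icc (-R) R)ᶜ := by
    refine ((hF.norm.const_mul c).integrableOn).mono' hG.aestronglyMeasurable ?_
    refine (ae_restrict_mem measurableSet_Icc.compl).mono fun x hx => h x ?_
    by_contra hx'
    exact hx (abs_le.1 (not_lt.1 hx'))
  simpa using hK.union hKc

/-- The zeros of an extremizer do not come in pairs `w, conj w`, counted with multiplicity. -/
lemma IsExtremizer.paleyWiener_quotient_ne_zero {F : ℝ → ℂ} (hF : IsExtremizer F) {ψ : ℝ → ℂ}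
    (hψ : Continuous ψ) (hψs : Function.support ψ ⊆ Set.Icc (-1 : ℝ) 1) {w : ℂ}
    (hdiv : ∀ z, paleyWiener (𝓕 F) z = (z - w) * paleyWiener ψ z) :
    paleyWiener ψ (starRingEnd ℂ w) ≠ 0 := by
  intro h0
  have hFc := hF.bandlimited.continuous
  have hφ := hF.bandlimited.continuous_fourier
  obtain ⟨χ, hχ, hχs, hχdiv⟩ := exists_paleyWiener_div hψ hψs h0
  set κ : ℝ → ℂ := fun t => 1 * 𝓕 F t + 1 *
    ((w + starRingEnd ℂ w) * ψ t + (starRingEnd ℂ w) ^ 2 * χ t) with hκ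
  have hκc : Continuous κ := by fun_prop
  have hκs : Function.support κ ⊆ Set.Icc (-1 : ℝ) 1 := by
    intro t ht
    by_contra hmem
    apply ht
    simp [hκ, eq_zero_of_support_subset_Icc hF.bandlimited.support_subset hmem,
      eq_zero_of_support_subset_Icc hψs hmem, eq_zero_of_support_subset_Icc hχs hmem]
  have hF' : ∀ z, paleyWiener (𝓕 F) z
      = (z - w) * (z - starRingEnd ℂ w) * paleyWiener χ z := fun z => by
    rw [hdiv, hχdiv]
    ring
  have hκ' : ∀ z, paleyWiener κ z = z ^ 2 * paleyWiener χ z := fun z => by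
    rw [hκ, paleyWiener_linear hφ (by fun_prop), paleyWiener_linear hψ hχ, hF', hχdiv]
    ring
  have hsq : ∀ x : ℝ, ((x : ℂ) - w) * (x - starRingEnd ℂ w) = (‖(x : ℂ) - w‖ ^ 2 : ℝ) := fun x => by
    rw [← normSq_eq_norm_sq, ← mul_conj]
    simp
  have hmul : ∀ x : ℝ, (x : ℂ) ≠ w →
      paleyWiener κ x = ((x ^ 2 / ‖(x : ℂ) - w‖ ^ 2 : ℝ) : ℂ) * F x := by
    intro x hx
    have hn : ‖(x : ℂ) - w‖ ≠ 0 := norm_ne_zero_iff.2 (sub_ne_zero.2 hx)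
    rw [hF.bandlimited.eq_paleyWiener x, hF', hsq, hκ']
    have : ((‖(x : ℂ) - w‖ : ℝ) : ℂ) ≠ 0 := by exact_mod_cast hn
    push_cast
    field_simp
  have hGi : Integrable fun x : ℝ => paleyWiener κ x := by
    refine integrable_of_norm_le_of_lt_abs (R := 2 * ‖w‖) (c := 4) hF.bandlimited.integrable
      ((differentiable_paleyWiener hκc).continuous.comp continuous_ofReal) fun x hx => ?_
    have h1 : |x| / 2 < ‖(x : ℂ) - w‖ := by
      have := norm_sub_norm_le (x : ℂ) w
      rw [norm_real, Real.norm_eq_abs] at this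
      linarith
    have h2 : (0 : ℝ) ≤ |x| := abs_nonneg x
    have hn : 0 < ‖(x : ℂ) - w‖ := by linarith
    rw [hmul x (fun h => by simp [h] at hn), norm_mul, norm_real, Real.norm_eq_abs,
      abs_of_nonneg (by positivity)]
    gcongr
    rw [div_le_iff₀ (by positivity), ← sq_abs x]
    nlinarith
  have hae : ∀ᵐ x : ℝ, (x : ℂ) ≠ w := by
    filter_upwards [Measure.ae_ne volume w.re] with x hx h
    exact hx (by simp [← h])
  have hzero := hF.eq_zero_of_nonneg_multiple (bandlimited_paleyWiener hκc hκs hGi)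
    (by simp [hκ'])
    (hae.mono fun x hx => ⟨x ^ 2 / ‖(x : ℂ) - w‖ ^ 2, by positivity, hmul x hx⟩)
  have hFae : F =ᵐ[volume] fun _ => (0 : ℂ) := by
    filter_upwards [hae, Measure.ae_ne volume (0 : ℝ)] with x hx hx0
    have h1 := hκ' x
    rw [hzero x] at h1
    have h2 : paleyWiener χ x = 0 := by
      simpa [hx0] using h1.symm
    rw [hF.bandlimited.eq_paleyWiener x, hF', h2, mul_zero]
  have := congrFun ((hFc.ae_eq_iff_eq volume continuous_const).1 hFae) 0
  simp [hF.apply_zero] at this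

lemma IsExtremizer.im_eq_zero_of_root {F : ℝ → ℂ} (hF : IsExtremizer F) {w : ℂ}
    (hw : paleyWiener (𝓕 F) w = 0) : w.im = 0 := by
  obtain ⟨ψ, hψ, hψs, hdiv⟩ := exists_paleyWiener_div hF.bandlimited.continuous_fourier
    hF.bandlimited.support_subset hw
  have hne := hF.paleyWiener_quotient_ne_zero hψ hψs hdiv
  have h1 := hdiv (starRingEnd ℂ w)
  rw [paleyWiener_fourier_conj hF.conj_apply, hw, map_zero] at h1
  have h2 := (mul_eq_zero.1 h1.symm).resolve_right hne
  exact conj_eq_iff_im.1 (sub_eq_zero.1 h2)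

lemma IsExtremizer.deriv_ne_zero_of_root {F : ℝ → ℂ} (hF : IsExtremizer F) {w : ℂ}
    (hw : paleyWiener (𝓕 F) w = 0) : deriv (paleyWiener (𝓕 F)) w ≠ 0 := by
  obtain ⟨ψ, hψ, hψs, hdiv⟩ := exists_paleyWiener_div hF.bandlimited.continuous_fourier
    hF.bandlimited.support_subset hw
  have hne := hF.paleyWiener_quotient_ne_zero hψ hψs hdiv
  rw [conj_eq_iff_im.2 (hF.im_eq_zero_of_root hw)] at hne
  have hd : HasDerivAt (fun z => (z - w) * paleyWiener ψ z)
      (1 * paleyWiener ψ w + (w - w) * deriv (paleyWiener ψ) w) w :=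
    ((hasDerivAt_id w).sub_const w).mul (differentiable_paleyWiener hψ w).hasDerivAt
  rw [funext hdiv, hd.deriv]
  simpa using hne

/-- An entire function omitting the nonpositive reals is constant. -/
lemma apply_eq_apply_of_forall_mem_slitPlane {q : ℂ → ℂ} (hq : Differentiable ℂ q)
    (hs : ∀ z, q z ∈ slitPlane) (z w : ℂ) : q z = q w := by
  set s : ℂ → ℂ := fun z => cexp (log (q z) / 2) with hsdef
  have hsd : Differentiable ℂ s := fun z => (((hq z).clog (hs z)).div_const 2).cexp
  have hsq : ∀ z, s z ^ 2 = q z := fun z => by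
    rw [hsdef, ← Complex.exp_nat_mul]
    simp [mul_div_cancel₀, exp_log (slitPlane_ne_zero (hs z))]
  have hre : ∀ z, 0 < (s z).re := fun z => by
    rw [hsdef, exp_re]
    refine mul_pos (Real.exp_pos _) (Real.cos_pos_of_mem_Ioo ?_)
    have him : (log (q z) / 2).im = (q z).arg / 2 := by simp [log_im]
    have h1 := neg_pi_lt_arg (q z)
    have h2 : (q z).arg < π := lt_of_le_of_ne (arg_le_pi _) (mem_slitPlane_iff_arg.1 (hs z)).1
    rw [him]
    constructor <;> linarith
  have hone : ∀ z, 1 ≤ ‖1 + s z‖ := fun z => by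
    refine le_trans ?_ (re_le_norm _)
    simpa using (hre z).le
  have hne : ∀ z, 1 + s z ≠ 0 := fun z h => by
    have := hone z
    norm_num [h] at this
  have hbdd : Bornology.IsBounded (Set.range fun z => (1 + s z)⁻¹) := by
    refine (Metric.isBounded_closedBall (x := (0 : ℂ)) (r := 1)).subset ?_
    rintro _ ⟨z, rfl⟩
    rw [mem_closedBall_zero_iff, norm_inv]
    exact inv_le_one_of_one_le₀ (hone z)
  have hconst := ((hsd.const_add 1).inv hne).apply_eq_apply_of_bounded hbdd z w
  have : s z = s w := by simpa using hconst
  rw [← hsq, ← hsq, this]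

lemma differentiable_quotient_of_simple_zeros {f g : ℂ → ℂ} (hf : Differentiable ℂ f)
    (hg : Differentiable ℂ g) (hroot : ∀ w, f w = 0 → g w = 0) (hd : ∀ w, f w = 0 → deriv f w ≠ 0) :
    Differentiable ℂ fun z => if f z = 0 then deriv g z / deriv f z else g z / f z := by
  intro w
  by_cases hw : f w = 0
  · have hfd : Differentiable ℂ (dslope f w) := by
      rw [← differentiableOn_univ, Complex.differentiableOn_dslope univ_mem]
      exact hf.differentiableOn
    have hgd : Differentiable ℂ (dslope g w) := by
      rw [← differentiableOn_univ, Complex.differentiableOn_dslope univ_mem]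
      exact hg.differentiableOn
    have hne : dslope f w w ≠ 0 := by
      rw [dslope_same]
      exact hd w hw
    refine ((hgd w).div (hfd w) hne).congr_of_eventuallyEq ?_
    filter_upwards [hfd.continuous.continuousAt.eventually_ne hne] with z hz
    rcases eq_or_ne z w with rfl | hzw
    · simp [hw, dslope_same]
    · have hsub : z - w ≠ 0 := sub_ne_zero.2 hzw
      rw [dslope_of_ne _ hzw, slope_def_field, hw, sub_zero] at hz
      have hfz : f z ≠ 0 := fun h => hz (by simp [h])
      simp only [if_neg hfz, Pi.div_apply]
      rw [dslope_of_ne _ hzw, dslope_of_ne _ hzw, slope_def_field, slope_def_field, hw,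
        hroot w hw, sub_zero, sub_zero]
      field_simp
  · refine ((hg w).div (hf w) hw).congr_of_eventuallyEq ?_
    filter_upwards [hf.continuous.continuousAt.eventually_ne hw] with z hz
    simp [hz]

lemma IsExtremizer.paleyWiener_root {F G : ℝ → ℂ} (hF : IsExtremizer F) (hG : IsExtremizer G)
    {w : ℂ} (hw : paleyWiener (𝓕 F) w = 0) : paleyWiener (𝓕 G) w = 0 := by
  obtain ⟨x, rfl⟩ : ∃ x : ℝ, (x : ℂ) = w :=
    ⟨w.re, Complex.ext (by simp) (by simp [hF.im_eq_zero_of_root hw])⟩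
  have hd := (differentiable_paleyWiener hF.bandlimited.continuous_fourier (x : ℂ)).hasDerivAt
  have hne := hF.deriv_ne_zero_of_root hw
  set d := deriv (paleyWiener (𝓕 F)) (x : ℂ) with hddef
  have hFx : F x = 0 := by rw [hF.bandlimited.eq_paleyWiener, hw]
  have hdF : HasDerivAt F d x :=
    hd.comp_ofReal.congr_of_eventuallyEq (Eventually.of_forall hF.bandlimited.eq_paleyWiener)
  have hdre : HasDerivAt (fun y => (F y).re) d.re x :=
    (reCLM.hasFDerivAt.comp_hasDerivAt x hdF)
  have hreal : ∀ y, F y = ((F y).re : ℂ) := fun y =>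
    Complex.ext (by simp) (by simp [hF.im_eq_zero y])
  have hdeq : d = (d.re : ℂ) :=
    hdF.unique (hdre.ofReal_comp.congr_of_eventuallyEq (Eventually.of_forall hreal))
  have hprod : ∀ y, 0 ≤ (F y).re * (G y).re := by
    intro y
    have h := hF.norm_add hG y
    rw [← abs_re_eq_norm.2 (hF.im_eq_zero y), ← abs_re_eq_norm.2 (hG.im_eq_zero y),
      ← (abs_re_eq_norm (z := F y + G y)).2 (by simp [hF.im_eq_zero y, hG.im_eq_zero y]),
      add_re] at h
    rcases abs_add_eq_add_abs_iff _ _ |>.1 h with h | h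
    · exact mul_nonneg h.1 h.2
    · exact mul_nonneg_of_nonpos_of_nonpos h.1 h.2
  rw [← hG.bandlimited.eq_paleyWiener]
  by_contra hGx
  have hGre : (G x).re ≠ 0 := fun h => hGx (Complex.ext h (hG.im_eq_zero x))
  have hGcont : ContinuousAt (fun y => (G y).re) x :=
    (continuous_re.comp hG.bandlimited.continuous).continuousAt
  have hext : IsLocalExtr (fun y => (F y).re) x := by
    rcases lt_or_gt_of_ne hGre with h | h
    · refine Or.inr ?_
      filter_upwards [hGcont.eventually_lt_const h] with y hy
      simp only [hFx, zero_re]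
      nlinarith [hprod y]
    · refine Or.inl ?_
      filter_upwards [hGcont.eventually_const_lt h] with y hy
      simp only [hFx, zero_re]
      nlinarith [hprod y]
  apply hne
  rw [hdeq, hext.hasDerivAt_eq_zero hdre, ofReal_zero]

theorem IsExtremizer.eq {F G : ℝ → ℂ} (hF : IsExtremizer F) (hG : IsExtremizer G) : F = G := by
  have hFφ := hF.bandlimited.continuous_fourier
  have hGφ := hG.bandlimited.continuous_fourier
  have hFd := differentiable_paleyWiener hFφ
  have hGd := differentiable_paleyWiener hGφ
  set f := paleyWiener (𝓕 F) with hf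
  set g := paleyWiener (𝓕 G) with hg
  set q : ℂ → ℂ := fun z => if f z = 0 then deriv g z / deriv f z else g z / f z with hq
  have hqd : Differentiable ℂ q := differentiable_quotient_of_simple_zeros hFd hGd
    (fun w hw => hF.paleyWiener_root hG hw) fun w hw => hF.deriv_ne_zero_of_root hw
  have hslit : ∀ z, q z ∈ slitPlane := by
    intro z
    by_contra hz
    obtain ⟨r, hr, hqr⟩ : ∃ r : ℝ, 0 ≤ r ∧ q z = -(r : ℂ) := by
      rw [mem_slitPlane_iff, not_or, not_lt, not_not] at hz
      exact ⟨-(q z).re, by linarith [hz.1], Complex.ext (by simp) (by simp [hz.2])⟩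
    have hr1 : (0 : ℝ) < r + 1 := by linarith
    set a : ℝ := r / (r + 1) with ha
    set b : ℝ := 1 / (r + 1) with hb
    have hab : a + b = 1 := by rw [ha, hb]; field_simp
    have hba : (b : ℂ) * r = a := by rw [ha, hb]; push_cast; ring
    have hH := hF.convex hG (a := a) (b := b) (by positivity) (by positivity) hab
    have hHf : paleyWiener (𝓕 fun x => (a : ℂ) * F x + (b : ℂ) * G x)
        = fun z => (a : ℂ) * f z + (b : ℂ) * g z := by
      ext z
      rw [fourier_linear hF.bandlimited.integrable hG.bandlimited.integrable,
        paleyWiener_linear hFφ hGφ]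
    by_cases hfz : f z = 0
    · have hgz : g z = 0 := hF.paleyWiener_root hG hfz
      have hdf : deriv f z ≠ 0 := hF.deriv_ne_zero_of_root hfz
      have hne := hH.deriv_ne_zero_of_root (w := z) (by simp [hHf, hfz, hgz])
      apply hne
      have hd : HasDerivAt (fun z => (a : ℂ) * f z + (b : ℂ) * g z)
          ((a : ℂ) * deriv f z + (b : ℂ) * deriv g z) z :=
        ((hFd z).hasDerivAt.const_mul _).add ((hGd z).hasDerivAt.const_mul _)
      rw [hHf, hd.deriv]
      have h1 : deriv g z = -(r : ℂ) * deriv f z := by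
        rw [← hqr, hq]
        simp only [if_pos hfz]
        field_simp
      rw [h1, ← hba]
      ring
    · have h1 : g z = -(r : ℂ) * f z := by
        rw [← hqr, hq]
        simp only [if_neg hfz]
        field_simp
      have him := hH.im_eq_zero_of_root (w := z) (by
        simp only [hHf]
        rw [h1, ← hba]
        ring)
      obtain ⟨x, rfl⟩ : ∃ x : ℝ, (x : ℂ) = z := ⟨z.re, Complex.ext (by simp) (by simp [him])⟩
      have hFx : f x = F x := (hF.bandlimited.eq_paleyWiener x).symm
      have hGx : g x = G x := (hG.bandlimited.eq_paleyWiener x).symm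
      have hgz : g x ≠ 0 := fun h => hfz (hG.paleyWiener_root hF h)
      have hadd := hF.norm_add hG x
      rw [← hFx, ← hGx, h1, show f x + -(r : ℂ) * f x = ((1 - r : ℝ) : ℂ) * f x by
        push_cast; ring, norm_mul, norm_mul, norm_neg, norm_real, norm_real, Real.norm_eq_abs,
        Real.norm_eq_abs, abs_of_nonneg hr] at hadd
      have hfn : 0 < ‖f x‖ := norm_pos_iff.2 hfz
      have habs : |1 - r| = 1 + r := by
        apply mul_right_cancel₀ hfn.ne'
        linarith
      have hr0 : r = 0 := by
        rcases abs_cases (1 - r) with h | h <;> linarith [h.1, h.2]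
      exact hgz (by rw [h1, hr0]; simp)
  have hF0 : f 0 = 1 := by
    have := hF.bandlimited.eq_paleyWiener 0
    rw [hF.apply_zero] at this
    simpa [hf] using this.symm
  have hG0 : g 0 = 1 := by
    have := hG.bandlimited.eq_paleyWiener 0
    rw [hG.apply_zero] at this
    simpa [hg] using this.symm
  have hq0 : q 0 = 1 := by simp [hq, hF0, hG0]
  ext x
  rw [hF.bandlimited.eq_paleyWiener, hG.bandlimited.eq_paleyWiener]
  have hqx := (apply_eq_apply_of_forall_mem_slitPlane hqd hslit x 0).trans hq0
  by_cases hfx : f x = 0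
  · exact hfx.trans (hF.paleyWiener_root hG hfx).symm
  · simp only [hq, if_neg hfx] at hqx
    exact ((div_eq_one_iff_eq hfx).1 hqx).symm

lemma Bandlimited.const_mul {F : ℝ → ℂ} (hF : Bandlimited F) (c : ℂ) :
    Bandlimited fun x => c * F x := by
  simpa using hF.linear hF c 0

lemma Bandlimited.ratio_le_ccalInf {F : ℝ → ℂ} (hF : Bandlimited F) (h0 : F ≠ 0) :
    ‖F 0‖ / (∫ x, ‖F x‖) ≤ CcalInf := by
  refine le_csSup ⟨2, ?_⟩ ⟨F, hF.continuous, hF.integrable, h0, hF.support_subset, rfl⟩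
  rintro r ⟨G, hGc, hGi, -, hGs, rfl⟩
  exact div_le_of_le_mul₀ (integral_nonneg fun _ => norm_nonneg _) zero_le_two
    (Bandlimited.norm_apply_zero_le ⟨hGc, hGi, hGs⟩)

lemma Bandlimited.integral_norm_pos {F : ℝ → ℂ} (hF : Bandlimited F) (h0 : F ≠ 0) :
    0 < ∫ x, ‖F x‖ := by
  by_contra h
  exact h0 (funext fun x => norm_eq_zero.1 (eq_zero_of_integral_le_zero hF.continuous.norm
    hF.integrable.norm (fun _ => norm_nonneg _) (not_lt.1 h) x))

lemma Bandlimited.ccalInf_pos {F : ℝ → ℂ} (hF : Bandlimited F) (h0 : F ≠ 0) : 0 < CcalInf := by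
  obtain ⟨a, ha⟩ := Function.ne_iff.1 h0
  have hFa := hF.comp_add a
  have h0a : (fun x => F (x + a)) ≠ 0 := fun h => ha (by simpa using congrFun h 0)
  refine lt_of_lt_of_le (div_pos ?_ (hFa.integral_norm_pos h0a)) (hFa.ratio_le_ccalInf h0a)
  simpa using ha

lemma Bandlimited.apply_zero_ne_zero {F : ℝ → ℂ} (hF : Bandlimited F) (h0 : F ≠ 0)
    (he : ‖F 0‖ / (∫ x, ‖F x‖) = CcalInf) : F 0 ≠ 0 := fun h => by
  have := hF.ccalInf_pos h0
  rw [← he, h] at this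
  simp at this

lemma Bandlimited.isExtremizer {F : ℝ → ℂ} (hF : Bandlimited F) (h0 : F ≠ 0)
    (he : ‖F 0‖ / (∫ x, ‖F x‖) = CcalInf) : IsExtremizer fun x => (F 0)⁻¹ * F x := by
  have hF0 := hF.apply_zero_ne_zero h0 he
  refine ⟨hF.const_mul _, inv_mul_cancel₀ hF0, fun G hG hG0 => ?_⟩
  have hGne : G ≠ 0 := fun h => by simp [h] at hG0
  have h1 := hG.ratio_le_ccalInf hGne
  rw [← he, hG0, norm_one, div_le_div_iff₀ (hG.integral_norm_pos hGne) (hF.integral_norm_pos h0)]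
    at h1
  simp only [norm_mul, norm_inv]
  rw [integral_const_mul, inv_mul_le_iff₀ (norm_pos_iff.2 hF0)]
  linarith

/-- Uniqueness of extremizers of 𝒞(∞) up to a nonzero complex scalar. -/
theorem extremizer_unique
    (F₁ F₂ : ℝ → ℂ)
    (h₁c : Continuous F₁) (h₁i : Integrable F₁) (h₁0 : F₁ ≠ 0)
    (h₁s : Function.support (𝓕 F₁) ⊆ Set.Icc (-1 : ℝ) 1)
    (h₂c : Continuous F₂) (h₂i : Integrable F₂) (h₂0 : F₂ ≠ 0)
    (h₂s : Function.support (𝓕 F₂) ⊆ Set.Icc (-1 : ℝ) 1)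
    (he₁ : ‖F₁ 0‖ / (∫ x : ℝ, ‖F₁ x‖) = CcalInf)
    (he₂ : ‖F₂ 0‖ / (∫ x : ℝ, ‖F₂ x‖) = CcalInf) :
    ∃ c : ℂ, c ≠ 0 ∧ F₂ = fun x => c * F₁ x := by
  have hF₁ : Bandlimited F₁ := ⟨h₁c, h₁i, h₁s⟩
  have hF₂ : Bandlimited F₂ := ⟨h₂c, h₂i, h₂s⟩
  have hne₁ := hF₁.apply_zero_ne_zero h₁0 he₁
  have hne₂ := hF₂.apply_zero_ne_zero h₂0 he₂
  refine ⟨F₂ 0 * (F₁ 0)⁻¹, mul_ne_zero hne₂ (inv_ne_zero hne₁), funext fun x => ?_⟩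
  have h := congrFun ((hF₁.isExtremizer h₁0 he₁).eq (hF₂.isExtremizer h₂0 he₂)) x
  rw [mul_assoc, h, mul_inv_cancel_left₀ hne₂]
end

section
/- The sharp constant 𝒞⁺(∞) satisfies 𝒞⁺(∞) < 6/5; equivalently, there is a constant K < 6/5 such that every even continuous F : ℝ → ℝ with F ∈ L¹(ℝ) and F̂(t) ≤ 0 for all |t| ≥ 1 satisfies F(0) ≤ K·‖F‖₁. -/
open MeasureTheory Filter
open scoped FourierTransform Real

lemma nonneg_of_hasDerivAt_nonneg {f f' : ℝ → ℝ} (h₀ : f 0 = 0)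
    (hf : ∀ x, HasDerivAt f (f' x) x) (hf' : ∀ x, 0 ≤ x → 0 ≤ f' x) {x : ℝ} (hx : 0 ≤ x) :
    0 ≤ f x := by
  have hmono : MonotoneOn f (Set.Ici 0) := by
    refine monotoneOn_of_hasDerivWithinAt_nonneg (convex_Ici 0)
      (fun y _ => (hf y).continuousAt.continuousWithinAt)
      (fun y _ => (hf y).hasDerivWithinAt) (fun y hy => hf' y ?_)
    exact interior_subset hy
  simpa [h₀] using hmono (Set.mem_Ici.2 le_rfl) (Set.mem_Ici.2 hx) hx

lemma hasDerivAt_sinTaylor (n : ℕ) (x : ℝ) :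
    HasDerivAt (fun x : ℝ =>
        ∑ k ∈ Finset.range n, (-1) ^ k * x ^ (2 * k + 1) / (2 * k + 1).factorial)
      (∑ k ∈ Finset.range n, (-1) ^ k * x ^ (2 * k) / (2 * k).factorial) x := by
  refine HasDerivAt.fun_sum fun k _ => ?_
  refine (((hasDerivAt_pow (2 * k + 1) x).const_mul ((-1) ^ k)).div_const _).congr_deriv ?_
  rw [Nat.factorial_succ]
  push_cast
  field_simp

lemma hasDerivAt_cosTaylor (n : ℕ) (x : ℝ) :
    HasDerivAt (fun x : ℝ =>
        ∑ k ∈ Finset.range (n + 1), (-1) ^ k * x ^ (2 * k) / (2 * k).factorial)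
      (-∑ k ∈ Finset.range n, (-1) ^ k * x ^ (2 * k + 1) / (2 * k + 1).factorial) x := by
  simp_rw [Finset.sum_range_succ']
  simp only [mul_zero, pow_zero, Nat.factorial_zero, Nat.cast_one, mul_one, div_one]
  rw [← Finset.sum_neg_distrib]
  refine HasDerivAt.add_const _ (HasDerivAt.fun_sum fun k _ => ?_)
  refine (((hasDerivAt_pow (2 * (k + 1)) x).const_mul ((-1) ^ (k + 1))).div_const _).congr_deriv ?_
  rw [show 2 * (k + 1) = 2 * k + 1 + 1 by ring, Nat.factorial_succ (2 * k + 1)]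
  push_cast
  field_simp
  simp only [pow_succ]
  ring

lemma sin_sub_taylor_sign_of_cos {n : ℕ}
    (h : ∀ x : ℝ, 0 ≤ x → 0 ≤ (-1) ^ n *
      (Real.cos x - ∑ k ∈ Finset.range n, (-1) ^ k * x ^ (2 * k) / (2 * k).factorial))
    {x : ℝ} (hx : 0 ≤ x) : 0 ≤ (-1) ^ n *
      (Real.sin x - ∑ k ∈ Finset.range n, (-1) ^ k * x ^ (2 * k + 1) / (2 * k + 1).factorial) :=
  nonneg_of_hasDerivAt_nonneg (f := fun x => (-1) ^ n *
      (Real.sin x - ∑ k ∈ Finset.range n, (-1) ^ k * x ^ (2 * k + 1) / (2 * k + 1).factorial))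
    (by simp) (fun y => ((Real.hasDerivAt_sin y).sub (hasDerivAt_sinTaylor n y)).const_mul _) h hx

/-- The Taylor polynomials of cosine at `0` lie alternately above and below it on `[0, ∞)`. -/
lemma cos_sub_taylor_sign (n : ℕ) : ∀ x : ℝ, 0 ≤ x → 0 ≤ (-1) ^ (n + 1) *
    (Real.cos x - ∑ k ∈ Finset.range (n + 1), (-1) ^ k * x ^ (2 * k) / (2 * k).factorial) := by
  induction n with
  | zero => intro x _; simpa using Real.cos_le_one x
  | succ n ih =>
    intro x hx
    refine nonneg_of_hasDerivAt_nonneg (f := fun x => (-1) ^ (n + 1 + 1) * (Real.cos x -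
        ∑ k ∈ Finset.range (n + 1 + 1), (-1) ^ k * x ^ (2 * k) / (2 * k).factorial))
      (by simp [Finset.sum_range_succ'])
      (fun y => ((Real.hasDerivAt_cos y).sub (hasDerivAt_cosTaylor (n + 1) y)).const_mul _)
      (fun y hy => ?_) hx
    have := sin_sub_taylor_sign_of_cos ih hy
    rw [pow_succ]
    linarith

/-- The Taylor polynomials of sine at `0` lie alternately above and below it on `[0, ∞)`. -/
lemma sin_sub_taylor_sign (n : ℕ) {x : ℝ} (hx : 0 ≤ x) : 0 ≤ (-1) ^ (n + 1) *
    (Real.sin x -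
      ∑ k ∈ Finset.range (n + 1), (-1) ^ k * x ^ (2 * k + 1) / (2 * k + 1).factorial) :=
  sin_sub_taylor_sign_of_cos (cos_sub_taylor_sign n) hx

lemma dualKernel_taylor_ineq {w : ℝ} (hw₀ : 0 ≤ w) (hw : w ≤ 10) :
    2 * (1 - w / 6 + w ^ 2 / 120 - w ^ 3 / 5040 + w ^ 4 / 362880) *
      (9 / 10 + 1 / 5 * (1 - w / 2 + w ^ 2 / 24 - w ^ 3 / 720 + w ^ 4 / 40320)) ≤
    1199 / 1000 + 51 / 50 *
      (1 - w / 2 + w ^ 2 / 24 - w ^ 3 / 720 + w ^ 4 / 40320 - w ^ 5 / 3628800) := by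
  rcases le_total w 5 with h | h
  · have b : ∀ i : ℕ, 0 ≤ w ^ i * (5 - w) ^ (8 - i) := fun i =>
      mul_nonneg (pow_nonneg hw₀ _) (pow_nonneg (sub_nonneg.2 h) _)
    have := b 0; have := b 1; have := b 2; have := b 3; have := b 4
    have := b 5; have := b 6; have := b 7; have := b 8
    norm_num at *
    linarith
  · have b : ∀ i : ℕ, 0 ≤ (w - 5) ^ i * (10 - w) ^ (8 - i) := fun i =>
      mul_nonneg (pow_nonneg (sub_nonneg.2 h) _) (pow_nonneg (sub_nonneg.2 hw) _)
    have := b 0; have := b 1; have := b 2; have := b 3; have := b 4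
    have := b 5; have := b 6; have := b 7; have := b 8
    norm_num at *
    linarith

lemma dualKernel_le_on_zero_pi {u : ℝ} (hu : 0 < u) (huπ : u ≤ π) :
    2 * (Real.sin u / u) * (9 / 10 + 1 / 5 * Real.cos u) ≤ 1199 / 1000 + 51 / 50 * Real.cos u := by
  have hw : u ^ 2 ≤ 10 := by nlinarith [Real.pi_lt_d2]
  have hS := sin_sub_taylor_sign 4 hu.le
  have hU := cos_sub_taylor_sign 4 u hu.le
  have hL := cos_sub_taylor_sign 5 u hu.le
  norm_num [Finset.sum_range_succ, Nat.factorial] at hS hU hL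
  have key := dualKernel_taylor_ineq (sq_nonneg u) hw
  have hsin : Real.sin u / u ≤ 1 - u ^ 2 / 6 + (u ^ 2) ^ 2 / 120 - (u ^ 2) ^ 3 / 5040 +
      (u ^ 2) ^ 4 / 362880 := by
    rw [div_le_iff₀ hu]
    linarith
  have hcos : Real.cos u ≤ 1 - u ^ 2 / 2 + (u ^ 2) ^ 2 / 24 - (u ^ 2) ^ 3 / 720 +
      (u ^ 2) ^ 4 / 40320 := by linarith
  have hsin₀ : 0 ≤ Real.sin u / u :=
    div_nonneg (Real.sin_nonneg_of_nonneg_of_le_pi hu.le huπ) hu.le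
  have hcos₁ := Real.neg_one_le_cos u
  refine le_trans (mul_le_mul (by linarith) (by linarith) (by linarith) (by linarith))
    (key.trans ?_)
  linarith

/-- With `u = 2πx`, this bounds the Fourier transform of the signed measure with density
`9 / 10 * 1_[-1, 1] + 1 / 10 * 1_[-2, 2]` and point masses `-51 / 100` at `±1`. -/
lemma abs_dualKernel_le {u : ℝ} (hu : 0 < u) :
    |2 * (Real.sin u / u) * (9 / 10 + 1 / 5 * Real.cos u) - 51 / 50 * Real.cos u| ≤
      1199 / 1000 := by
  have hc₁ := Real.neg_one_le_cos u
  have hc₂ := Real.cos_le_one u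
  have hπ := Real.pi_gt_d2
  rcases le_total u π with h | h
  · have h₁ := dualKernel_le_on_zero_pi hu h
    have hs : 0 ≤ Real.sin u / u :=
      div_nonneg (Real.sin_nonneg_of_nonneg_of_le_pi hu.le h) hu.le
    have h₂ : 0 ≤ 2 * (Real.sin u / u) * (9 / 10 + 1 / 5 * Real.cos u) :=
      mul_nonneg (by linarith) (by linarith)
    rw [abs_le]
    constructor <;> linarith
  have hs : |Real.sin u / u| ≤ 1 / 3 := by
    rw [abs_div, abs_of_pos hu, div_le_div_iff₀ hu (by norm_num)]
    nlinarith [Real.abs_sin_le_one u]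
  rcases le_total u (3 * π / 2) with h' | h'
  · have hsin : Real.sin u ≤ 0 := by
      have := Real.sin_nonneg_of_nonneg_of_le_pi (x := u - π) (by linarith) (by linarith)
      rw [Real.sin_sub_pi] at this
      linarith
    have hcos : Real.cos u ≤ 0 :=
      Real.cos_nonpos_of_pi_div_two_le_of_le (by linarith) (by linarith)
    have hq : Real.sin u / u ≤ 0 := div_nonpos_of_nonpos_of_nonneg hsin hu.le
    have hq' := (abs_le.1 hs).1
    rw [abs_le]
    constructor <;> nlinarith
  · have hsq := Real.sin_sq_add_cos_sq u
    have hr : 1 / u ≤ 1 / 4 := one_div_le_one_div_of_le (by norm_num) (by linarith)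
    have hr₀ : 0 < 1 / u := by positivity
    set a : ℝ := 2 * (1 / u) * (9 / 10 + 1 / 5 * Real.cos u) with ha
    have ha₀ : 0 ≤ a := by rw [ha]; exact mul_nonneg (by linarith) (by linarith)
    have ha₁ : a ≤ 11 / 20 := by
      rw [ha]
      nlinarith [mul_nonneg hr₀.le (sub_nonneg.2 hc₂)]
    rw [show 2 * (Real.sin u / u) * (9 / 10 + 1 / 5 * Real.cos u) - 51 / 50 * Real.cos u =
      a * Real.sin u - 51 / 50 * Real.cos u by rw [ha]; ring]
    refine abs_le_of_sq_le_sq ?_ (by norm_num)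
    have hid : (a * Real.sin u - 51 / 50 * Real.cos u) ^ 2 +
        (a * Real.cos u + 51 / 50 * Real.sin u) ^ 2 = a ^ 2 + (51 / 50) ^ 2 := by
      linear_combination (a ^ 2 + (51 / 50) ^ 2) * hsq
    nlinarith [sq_nonneg (a * Real.cos u + 51 / 50 * Real.sin u)]

lemma integral_fourier_mul_eq_flip {f g : ℝ → ℂ} (hf : Integrable f) (hg : Integrable g) :
    ∫ t, 𝓕 f t * g t = ∫ x, f x * 𝓕 g x := by
  have := VectorFourier.integral_fourierIntegral_smul_eq_flip (L := innerₗ ℝ)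
    Real.continuous_fourierChar continuous_inner hf hg
  rw [flip_innerₗ] at this
  exact this

/-- Gaussian summability of the inverse Fourier integral at a point of continuity. -/
lemma tendsto_integral_gaussian_mul_fourier {f : ℝ → ℂ} (hf : Integrable f)
    (h₀ : ContinuousAt f 0) :
    Tendsto (fun c : ℝ => ∫ t : ℝ, 𝓕 f t * (Real.exp (-c⁻¹ * t ^ 2) : ℂ)) atTop (nhds (f 0)) := by
  refine (Real.tendsto_integral_gaussian_smul' hf h₀).congr' ?_
  filter_upwards [Ioi_mem_atTop 0] with c (hc : 0 < c)
  have hc' : 0 < ((c : ℂ)⁻¹).re := by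
    rw [← Complex.ofReal_inv]
    simpa using hc
  have hexp : (fun t : ℝ => (Real.exp (-c⁻¹ * t ^ 2) : ℂ)) =
      fun t : ℝ => Complex.exp (-(c : ℂ)⁻¹ * ‖t‖ ^ 2) := by
    funext t
    rw [← Complex.ofReal_pow ‖t‖, Real.norm_eq_abs, sq_abs]
    push_cast
    rfl
  have hg : Integrable fun t : ℝ => (Real.exp (-c⁻¹ * t ^ 2) : ℂ) :=
    (integrable_exp_neg_mul_sq (inv_pos.2 hc)).ofReal
  rw [integral_fourier_mul_eq_flip hf hg, hexp]
  congr with x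
  rw [fourier_gaussian_innerProductSpace hc']
  simp only [zero_sub, norm_neg, smul_eq_mul]
  rw [mul_comm (f x)]
  congr 2
  · simp
  · congr 1
    simp
    ring

lemma FTr_eq_integral {F : ℝ → ℝ} (hF : Integrable F) (t : ℝ) :
    FTr F t = ∫ x, F x * Real.cos (2 * π * t * x) := by
  have hfun : Integrable fun x : ℝ =>
      Complex.exp (((-2 * π * inner ℝ x t : ℝ) : ℂ) * Complex.I) • (F x : ℂ) := by
    refine hF.ofReal.bdd_mul (c := 1) (by fun_prop) (ae_of_all _ fun x => ?_)
    exact (Complex.norm_exp_ofReal_mul_I _).le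
  rw [FTr, Real.fourier_eq', ← Complex.reCLM_apply, ← Complex.reCLM.integral_comp_comm hfun]
  congr with x
  rw [Complex.reCLM_apply, smul_eq_mul, Complex.re_mul_ofReal, Complex.exp_ofReal_mul_I_re,
    mul_comm, ← Real.cos_neg]
  congr 2
  simp
  ring

lemma continuous_fourier_of_integrable_s10 {f : ℝ → ℂ} (hf : Integrable f) : Continuous (𝓕 f) :=
  VectorFourier.fourierIntegral_continuous Real.continuous_fourierChar
    (L := innerₗ ℝ) continuous_inner hf

lemma continuous_FTr {F : ℝ → ℝ} (hF : Integrable F) : Continuous (FTr F) :=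
  Complex.continuous_re.comp (continuous_fourier_of_integrable_s10 hF.ofReal)

lemma abs_FTr_le {F : ℝ → ℝ} (t : ℝ) : |FTr F t| ≤ ∫ x, |F x| := by
  refine (Complex.abs_re_le_norm _).trans ?_
  simpa using! VectorFourier.norm_fourierIntegral_le_integral_norm Real.fourierChar volume
    (innerₗ ℝ) (fun x => (F x : ℂ)) t

lemma fourier_indicator_Icc {a : ℝ} (ha : 0 ≤ a) {x : ℝ} (hx : x ≠ 0) :
    𝓕 ((Set.Icc (-a) a).indicator fun _ => (1 : ℂ)) x =
      ((Real.sin (2 * π * a * x) / (π * x) : ℝ) : ℂ) := by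
  have hc : (-2 * π * x * Complex.I : ℂ) ≠ 0 := by
    simp [hx, Real.pi_ne_zero]
  have hconv : 𝓕 ((Set.Icc (-a) a).indicator fun _ => (1 : ℂ)) x =
      ∫ t in (-a)..a, Complex.exp (-2 * π * x * Complex.I * t) := by
    rw [Real.fourier_eq', intervalIntegral.integral_of_le (by linarith),
      ← integral_Icc_eq_integral_Ioc, ← integral_indicator measurableSet_Icc]
    congr with t
    by_cases ht : t ∈ Set.Icc (-a) a
    · simp only [ht, Set.indicator_of_mem, smul_eq_mul, mul_one]
      congr 1
      simp
      ring
    · simp [ht]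
  rw [hconv, integral_exp_mul_complex hc]
  have h₁ : (-2 * π * x * Complex.I * a : ℂ) = ((-(2 * π * a * x) : ℝ) : ℂ) * Complex.I := by
    push_cast; ring
  have h₂ : (-2 * π * x * Complex.I * (-a : ℝ) : ℂ) = ((2 * π * a * x : ℝ) : ℂ) * Complex.I := by
    push_cast; ring
  rw [h₁, h₂, Complex.exp_mul_I, Complex.exp_mul_I, ← Complex.ofReal_cos, ← Complex.ofReal_sin,
    ← Complex.ofReal_cos, ← Complex.ofReal_sin, Real.cos_neg, Real.sin_neg]
  have hx' : (x : ℂ) ≠ 0 := by exact_mod_cast hx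
  have hπ : (π : ℂ) ≠ 0 := by exact_mod_cast Real.pi_ne_zero
  push_cast
  field_simp
  ring

lemma integrable_FTr_mul {F g : ℝ → ℝ} (hF : Integrable F) (hg : Integrable g) :
    Integrable fun t => FTr F t * g t :=
  hg.bdd_mul (continuous_FTr hF).aestronglyMeasurable (ae_of_all _ fun t => abs_FTr_le t)

lemma integral_FTr_mul_eq_re {F g : ℝ → ℝ} (hF : Integrable F) (hg : Integrable g) :
    ∫ t, FTr F t * g t = (∫ t, 𝓕 (fun x => (F x : ℂ)) t * (g t : ℂ)).re := by
  have hcont : Continuous (𝓕 fun x => (F x : ℂ)) :=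
    continuous_fourier_of_integrable_s10 hF.ofReal
  have hfun : Integrable fun t => 𝓕 (fun x => (F x : ℂ)) t * (g t : ℂ) := by
    refine hg.ofReal.bdd_mul (c := ∫ x, ‖(F x : ℂ)‖) hcont.aestronglyMeasurable
      (ae_of_all _ fun t => ?_)
    exact VectorFourier.norm_fourierIntegral_le_integral_norm Real.fourierChar volume
      (innerₗ ℝ) (fun x => (F x : ℂ)) t
  rw [← Complex.reCLM_apply, ← Complex.reCLM.integral_comp_comm hfun]
  simp [FTr]

lemma integrable_mul_sinc {F : ℝ → ℝ} (hF : Integrable F) (a : ℝ) :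
    Integrable fun x => F x * (Real.sin (2 * π * a * x) / (π * x)) := by
  refine hF.mul_bdd (c := 2 * |a|) (Measurable.aestronglyMeasurable (by fun_prop))
    (ae_of_all _ fun x => ?_)
  rcases eq_or_ne x 0 with rfl | hx
  · simp
  rw [Real.norm_eq_abs, abs_div, div_le_iff₀ (by positivity)]
  refine (Real.abs_sin_le_abs).trans_eq ?_
  simp only [abs_mul, abs_two]
  ring

lemma integrable_indicator_Icc_one (a : ℝ) :
    Integrable ((Set.Icc (-a) a).indicator fun _ : ℝ => (1 : ℝ)) :=
  (integrable_indicator_iff measurableSet_Icc).2 (by simp)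

lemma integral_FTr_mul_indicator {F : ℝ → ℝ} (hF : Integrable F) {a : ℝ} (ha : 0 ≤ a) :
    ∫ t, FTr F t * (Set.Icc (-a) a).indicator (fun _ => 1) t =
      ∫ x, F x * (Real.sin (2 * π * a * x) / (π * x)) := by
  have hg := integrable_indicator_Icc_one a
  have hind : (fun t => (((Set.Icc (-a) a).indicator (fun _ : ℝ => (1 : ℝ)) t : ℝ) : ℂ)) =
      (Set.Icc (-a) a).indicator fun _ => (1 : ℂ) := by
    funext t
    by_cases ht : t ∈ Set.Icc (-a) a <;> simp [ht]
  have hae : ∀ᵐ x : ℝ, x ≠ 0 := by simp [ae_iff]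
  have hflip := integral_fourier_mul_eq_flip (f := fun x => (F x : ℂ))
    (g := fun t => ((Set.Icc (-a) a).indicator (fun _ => 1) t : ℝ)) hF.ofReal hg.ofReal
  rw [integral_FTr_mul_eq_re hF hg, hflip, hind,
    integral_congr_ae (g := fun x => ((F x * (Real.sin (2 * π * a * x) / (π * x)) : ℝ) : ℂ)),
    integral_complex_ofReal, Complex.ofReal_re]
  filter_upwards [hae] with x hx
  rw [fourier_indicator_Icc ha hx, Complex.ofReal_mul]

/-- The pointwise comparison of a wide Gaussian with the step weight
`9 / 10 * 1_[-1, 1] + 1 / 10 * 1_[-2, 2]`. -/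
lemma FTr_mul_gaussian_le {F : ℝ → ℝ} (hneg : ∀ t : ℝ, 1 ≤ |t| → FTr F t ≤ 0) {c : ℝ}
    (hc : 5 ≤ c) (t : ℝ) :
    FTr F t * Real.exp (-c⁻¹ * t ^ 2) ≤
      9 / 10 * (FTr F t * (Set.Icc (-1 : ℝ) 1).indicator (fun _ => 1) t) +
      1 / 10 * (FTr F t * (Set.Icc (-2 : ℝ) 2).indicator (fun _ => 1) t) +
      c⁻¹ * (∫ x, |F x|) * (Set.Icc (-1 : ℝ) 1).indicator (fun _ => 1) t := by
  have hc₀ : 0 < c⁻¹ := inv_pos.2 (by linarith)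
  have hc₁ : c⁻¹ ≤ 1 / 5 := by
    rw [← one_div]
    exact one_div_le_one_div_of_le (by norm_num) hc
  have hexp := Real.add_one_le_exp (-c⁻¹ * t ^ 2)
  have hM := abs_FTr_le (F := F) t
  by_cases h₁ : t ∈ Set.Icc (-1 : ℝ) 1
  · have h₂ : t ∈ Set.Icc (-2 : ℝ) 2 := ⟨by linarith [h₁.1], by linarith [h₁.2]⟩
    have ht : t ^ 2 ≤ 1 := by nlinarith [h₁.1, h₁.2]
    have hle : Real.exp (-c⁻¹ * t ^ 2) ≤ 1 := by
      rw [Real.exp_le_one_iff]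
      nlinarith [sq_nonneg t]
    have hge : 1 - Real.exp (-c⁻¹ * t ^ 2) ≤ c⁻¹ := by nlinarith
    have : -FTr F t * (1 - Real.exp (-c⁻¹ * t ^ 2)) ≤ (∫ x, |F x|) * c⁻¹ :=
      mul_le_mul ((neg_le_abs _).trans hM) hge (by linarith) ((abs_nonneg _).trans hM)
    simp only [h₁, h₂, Set.indicator_of_mem]
    linarith
  · have habs : 1 ≤ |t| := by
      by_contra! h
      exact h₁ ⟨(abs_lt.1 h).1.le, (abs_lt.1 h).2.le⟩
    have hG := hneg t habs
    by_cases h₂ : t ∈ Set.Icc (-2 : ℝ) 2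
    · have ht : t ^ 2 ≤ 4 := by nlinarith [h₂.1, h₂.2]
      have hge : 1 / 10 ≤ Real.exp (-c⁻¹ * t ^ 2) := by nlinarith
      simp only [h₁, h₂, Set.indicator_of_mem, not_false_eq_true, Set.indicator_of_notMem]
      nlinarith
    · simp only [h₁, h₂, not_false_eq_true, Set.indicator_of_notMem]
      nlinarith [mul_nonneg (neg_nonneg.2 hG) (Real.exp_pos (-c⁻¹ * t ^ 2)).le]

lemma integral_FTr_step_le {F : ℝ → ℝ} (hF : Integrable F) (h₁ : FTr F 1 ≤ 0) :
    9 / 10 * (∫ x, F x * (Real.sin (2 * π * 1 * x) / (π * x))) +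
      1 / 10 * (∫ x, F x * (Real.sin (2 * π * 2 * x) / (π * x))) ≤
      1199 / 1000 * ∫ x, |F x| := by
  have hcos : Integrable fun x => F x * Real.cos (2 * π * 1 * x) :=
    hF.mul_bdd (c := 1) (by fun_prop) (ae_of_all _ fun x => Real.abs_cos_le_one _)
  have hs₁ := integrable_mul_sinc hF 1
  have hs₂ := integrable_mul_sinc hF 2
  have hae : ∀ᵐ x : ℝ, x ≠ 0 := by simp [ae_iff]
  have hbound : ∫ x, (9 / 10 * (F x * (Real.sin (2 * π * 1 * x) / (π * x))) +
      1 / 10 * (F x * (Real.sin (2 * π * 2 * x) / (π * x))) -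
      51 / 50 * (F x * Real.cos (2 * π * 1 * x))) ≤ ∫ x, 1199 / 1000 * |F x| := by
    refine integral_mono_ae (((hs₁.const_mul _).fun_add (hs₂.const_mul _)).sub (hcos.const_mul _))
      (hF.abs.const_mul _) ?_
    filter_upwards [hae] with x hx
    have hu : 0 < 2 * π * |x| := by positivity
    have hk := abs_dualKernel_le hu
    have hcosx : Real.cos (2 * π * |x|) = Real.cos (2 * π * x) := by
      rcases abs_choice x with h | h <;> rw [h]
      rw [mul_neg, Real.cos_neg]
    have hsinx : Real.sin (2 * π * |x|) / (2 * π * |x|) =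
        Real.sin (2 * π * x) / (2 * π * x) := by
      rcases abs_choice x with h | h <;> rw [h]
      rw [mul_neg, Real.sin_neg, neg_div_neg_eq]
    rw [hcosx, hsinx] at hk
    have hdouble : Real.sin (2 * π * 2 * x) =
        2 * Real.sin (2 * π * x) * Real.cos (2 * π * x) := by
      rw [← Real.sin_two_mul]
      ring_nf
    calc 9 / 10 * (F x * (Real.sin (2 * π * 1 * x) / (π * x))) +
          1 / 10 * (F x * (Real.sin (2 * π * 2 * x) / (π * x))) -
          51 / 50 * (F x * Real.cos (2 * π * 1 * x))
        = F x * (2 * (Real.sin (2 * π * x) / (2 * π * x)) *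
            (9 / 10 + 1 / 5 * Real.cos (2 * π * x)) - 51 / 50 * Real.cos (2 * π * x)) := by
          rw [hdouble, mul_one]
          field_simp
          ring
      _ ≤ |F x| * (1199 / 1000) := by
          refine (le_abs_self _).trans ?_
          rw [abs_mul]
          gcongr
      _ = 1199 / 1000 * |F x| := mul_comm _ _
  rw [integral_sub ((hs₁.const_mul _).fun_add (hs₂.const_mul _)) (hcos.const_mul _),
    integral_add (hs₁.const_mul _) (hs₂.const_mul _)] at hbound
  simp only [integral_const_mul] at hbound
  rw [← FTr_eq_integral hF 1] at hbound
  linarith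

lemma apply_zero_le_of_FTr_nonpos {F : ℝ → ℝ} (hcont : Continuous F) (hF : Integrable F)
    (hneg : ∀ t : ℝ, 1 ≤ |t| → FTr F t ≤ 0) : F 0 ≤ 1199 / 1000 * ∫ x, |F x| := by
  have hlim : Tendsto (fun c : ℝ => ∫ t, FTr F t * Real.exp (-c⁻¹ * t ^ 2)) atTop
      (nhds (F 0)) := by
    have h := (Complex.continuous_re.tendsto _).comp
      (tendsto_integral_gaussian_mul_fourier (f := fun x => (F x : ℂ)) hF.ofReal
        (Complex.continuous_ofReal.comp hcont).continuousAt)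
    rw [Complex.ofReal_re] at h
    refine h.congr' ?_
    filter_upwards [Ioi_mem_atTop 0] with c (hc : 0 < c)
    exact (integral_FTr_mul_eq_re hF (integrable_exp_neg_mul_sq (inv_pos.2 hc))).symm
  have hlim' : Tendsto (fun c : ℝ => 1199 / 1000 * (∫ x, |F x|) + c⁻¹ * (∫ x, |F x|) * 2) atTop
      (nhds (1199 / 1000 * ∫ x, |F x|)) := by
    simpa using ((tendsto_inv_atTop_zero.mul_const (∫ x, |F x|)).mul_const 2).const_add
      (1199 / 1000 * ∫ x, |F x|)
  refine le_of_tendsto_of_tendsto hlim hlim' ?_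
  filter_upwards [Ici_mem_atTop 5] with c (hc : 5 ≤ c)
  have hi₁ := integrable_FTr_mul hF (integrable_indicator_Icc_one 1)
  have hi₂ := integrable_FTr_mul hF (integrable_indicator_Icc_one 2)
  have hi₃ := (integrable_indicator_Icc_one 1).const_mul (c⁻¹ * ∫ x, |F x|)
  have hmono := integral_mono
    (integrable_FTr_mul hF (integrable_exp_neg_mul_sq (inv_pos.2 (by linarith : 0 < c))))
    (((hi₁.const_mul (9 / 10)).fun_add (hi₂.const_mul (1 / 10))).fun_add hi₃)
    (FTr_mul_gaussian_le hneg hc)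
  refine hmono.trans ?_
  rw [integral_add ((hi₁.const_mul _).fun_add (hi₂.const_mul _)) hi₃,
    integral_add (hi₁.const_mul _) (hi₂.const_mul _), integral_const_mul, integral_const_mul,
    integral_const_mul, integral_FTr_mul_indicator hF zero_le_one,
    integral_FTr_mul_indicator hF zero_le_two, integral_indicator measurableSet_Icc]
  have hvol : ∫ _ in Set.Icc (-1 : ℝ) 1, (1 : ℝ) = 2 := by
    norm_num [Measure.real]
  rw [hvol]
  linarith [integral_FTr_step_le hF (hneg 1 (by norm_num))]

/-- 𝒞⁺(∞) < 6/5: there is K < 6/5 bounding F(0) ≤ K‖F‖₁ for all F ∈ ℰ⁺. -/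
theorem CcalPlusInf_lt :
    CcalPlusInf < 6 / 5 ∧
    ∃ K : ℝ, K < 6 / 5 ∧
      ∀ F : ℝ → ℝ, Continuous F → Integrable F → (∀ x, F (-x) = F x) →
        (∀ t : ℝ, 1 ≤ |t| → FTr F t ≤ 0) → F 0 ≤ K * ∫ x : ℝ, |F x| := by
  refine ⟨lt_of_le_of_lt (b := 1199 / 1000) (Real.sSup_le ?_ (by norm_num)) (by norm_num),
    1199 / 1000, by norm_num, fun F hcont hF _ hneg => apply_zero_le_of_FTr_nonpos hcont hF hneg⟩
  rintro _ ⟨F, hcont, hF, -, -, hneg, rfl⟩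
  exact div_le_of_le_mul₀ (integral_nonneg fun x => abs_nonneg _) (by norm_num)
    (apply_zero_le_of_FTr_nonpos hcont hF hneg)
end
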